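/- arXiv:1812.02676 — 4 statements merged into one kernel-verified Lean document; each statement's English description precedes it below -/
import Mathlib

section
/- Let S be a nonempty finite set of pairs, t : S → {−1, 1}, Θ a type, d_s : Θ → ℝ for s ∈ S, with auxiliary loss l_s(1; θ) = d_s(θ) and l_s(−1; θ) = 2 − d_s(θ). Let w : {−1,1} → ℝ with w(1) > 0 and w(−1) > 0, q : {−1,1} → ℝ, and Z > 0. Define the clean risk R(θ) = (1/Z) ∑_{s∈S} w(t_s)·l_s(t_s; θ) and the noisy risk R̂(θ) = (1/Z) ∑_{s∈S} [(1 − q(t_s))·w(t_s)·l_s(t_s; θ) + q(t_s)·w(−t_s)·l_s(−t_s; θ)]. Set c(τ) = 1 − q(τ) − q(τ)·w(−τ)/w(τ) for τ ∈ {−1,1} and Q = min(c(1), c(−1)). If θ* and θ satisfy ∑_{s : t_s = 1} (l_s(t_s; θ*) − l_s(t_s; θ)) ≤ 0 and ∑_{s : t_s = −1} (l_s(t_s; θ*) − l_s(t_s; θ)) ≤ 0, then R̂(θ*) − R̂(θ) ≤ Q·(R(θ*) − R(θ)). -/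
/-!
The two losses of a pair add up to a constant, so passing from `θ` to `θ'` changes the loss at the
flipped label by the opposite of the change `x s` at the true label. Hence the noisy risk changes by
`(1 / Z) * ∑ s, c (t s) * w (t s) * x s`, and the clean risk by the same expression without the
factor `c (t s)`. That factor only depends on the label, and `∑ x s` over the pairs with a given
label is nonpositive, so replacing the factor by a lower bound `Q` can only increase the sum.
-/

theorem sum_comp_mul_nonpos_of_fiberwise {ι κ M : Type*} [DecidableEq κ]
    [NonUnitalNonAssocSemiring M] [PartialOrder M] [IsOrderedAddMonoid M] [PosMulMono M]
    {s : Finset ι} {r : Finset κ} {g : ι → κ} (hg : ∀ i ∈ s, g i ∈ r)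
    {a : κ → M} (ha : ∀ k ∈ r, 0 ≤ a k) {x : ι → M}
    (hx : ∀ k ∈ r, ∑ i ∈ s with g i = k, x i ≤ 0) :
    ∑ i ∈ s, a (g i) * x i ≤ 0 :=
  calc ∑ i ∈ s, a (g i) * x i
      = ∑ k ∈ r, ∑ i ∈ s with g i = k, a (g i) * x i :=
        (Finset.sum_fiberwise_of_maps_to hg _).symm
    _ = ∑ k ∈ r, a k * ∑ i ∈ s with g i = k, x i := by
        refine Finset.sum_congr rfl fun k _ => ?_
        rw [Finset.mul_sum]
        exact Finset.sum_congr rfl fun i hi => by rw [(Finset.mem_filter.mp hi).2]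
    _ ≤ 0 := Finset.sum_nonpos fun k hk =>
        mul_nonpos_of_nonneg_of_nonpos (ha k hk) (hx k hk)

section Risk

variable {S T Θ : Type*}

/-- The coefficient `c(τ)` by which label noise rescales the contribution of the pairs with true
label `τ` to a risk difference; `flip τ` is the label observed in place of `τ` under noise. -/
noncomputable def noiseFactor (flip : T → T) (q w : T → ℝ) (τ : T) : ℝ :=
  1 - q τ - q τ * (w (flip τ) / w τ)

theorem noiseFactor_mul_weight (flip : T → T) (q : T → ℝ) {w : T → ℝ} {τ : T} (hw : w τ ≠ 0) :
    noiseFactor flip q w τ * w τ = (1 - q τ) * w τ - q τ * w (flip τ) := by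
  rw [noiseFactor]
  field_simp

variable [Fintype S]

/-- The clean empirical risk `R(θ)`: the weighted sum of the losses at the true labels `t s`,
normalized by `Z`. -/
noncomputable def cleanRisk (Z : ℝ) (w : T → ℝ) (t : S → T) (l : S → T → Θ → ℝ) (θ : Θ) : ℝ :=
  (1 / Z) * ∑ s, w (t s) * l s (t s) θ

/-- The noisy empirical risk: the expectation of the weighted empirical risk when the label `t s` is
replaced by `flip (t s)` with probability `q (t s)`. The weight is that of the observed label. -/
noncomputable def noisyRisk (Z : ℝ) (flip : T → T) (q w : T → ℝ) (t : S → T)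
    (l : S → T → Θ → ℝ) (θ : Θ) : ℝ :=
  (1 / Z) * ∑ s, ((1 - q (t s)) * w (t s) * l s (t s) θ
    + q (t s) * w (flip (t s)) * l s (flip (t s)) θ)

theorem cleanRisk_sub (Z : ℝ) (w : T → ℝ) (t : S → T) (l : S → T → Θ → ℝ) (θ' θ : Θ) :
    cleanRisk Z w t l θ' - cleanRisk Z w t l θ =
      (1 / Z) * ∑ s, w (t s) * (l s (t s) θ' - l s (t s) θ) := by
  simp only [cleanRisk, ← mul_sub, ← Finset.sum_sub_distrib]

theorem noisyRisk_sub (Z : ℝ) {flip : T → T} (q : T → ℝ) {w : T → ℝ} {t : S → T}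
    (hw : ∀ s, w (t s) ≠ 0) {l : S → T → Θ → ℝ} {K : S → ℝ}
    (hl : ∀ s θ, l s (t s) θ + l s (flip (t s)) θ = K s) (θ' θ : Θ) :
    noisyRisk Z flip q w t l θ' - noisyRisk Z flip q w t l θ =
      (1 / Z) * ∑ s, noiseFactor flip q w (t s) * w (t s) * (l s (t s) θ' - l s (t s) θ) := by
  have flip_loss (s : S) (θ : Θ) : l s (flip (t s)) θ = K s - l s (t s) θ :=
    eq_sub_of_add_eq' (hl s θ)
  rw [noisyRisk, noisyRisk, ← mul_sub, ← Finset.sum_sub_distrib]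
  congr 1
  refine Finset.sum_congr rfl fun s _ => ?_
  rw [noiseFactor_mul_weight flip q (hw s), flip_loss, flip_loss]
  ring

theorem noisy_risk_difference_upper_bound_general [DecidableEq T] {Z : ℝ} (hZ : 0 < Z)
    {flip : T → T} {q w : T → ℝ} {t : S → T} {labels : Finset T} (ht : ∀ s, t s ∈ labels)
    (hw : ∀ τ ∈ labels, 0 < w τ) {l : S → T → Θ → ℝ} {K : S → ℝ}
    (hl : ∀ s θ, l s (t s) θ + l s (flip (t s)) θ = K s)
    {Q : ℝ} (hQ : ∀ τ ∈ labels, Q ≤ noiseFactor flip q w τ) {θ' θ : Θ}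
    (hloss : ∀ τ ∈ labels, ∑ s with t s = τ, (l s (t s) θ' - l s (t s) θ) ≤ 0) :
    noisyRisk Z flip q w t l θ' - noisyRisk Z flip q w t l θ ≤
      Q * (cleanRisk Z w t l θ' - cleanRisk Z w t l θ) := by
  have excess_nonpos :
      ∑ s, (noiseFactor flip q w (t s) - Q) * w (t s) * (l s (t s) θ' - l s (t s) θ) ≤ 0 :=
    sum_comp_mul_nonpos_of_fiberwise (a := fun τ => (noiseFactor flip q w τ - Q) * w τ)
      (fun s _ => ht s)
      (fun τ hτ => mul_nonneg (sub_nonneg.mpr (hQ τ hτ)) (hw τ hτ).le) hloss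
  rw [noisyRisk_sub Z q (fun s => (hw _ (ht s)).ne') hl, cleanRisk_sub, mul_left_comm]
  gcongr
  simpa only [sub_mul, Finset.sum_sub_distrib, mul_assoc, ← Finset.mul_sum, sub_nonpos]
    using excess_nonpos

end Risk

theorem noisy_risk_difference_upper_bound
    {S : Type*} [Fintype S] [Nonempty S] {Θ : Type*}
    (t : S → ℤ) (ht : ∀ s, t s = 1 ∨ t s = -1)
    (d : S → Θ → ℝ)
    (l : S → ℤ → Θ → ℝ)
    (hl1 : ∀ s θ, l s 1 θ = d s θ)
    (hlm : ∀ s θ, l s (-1) θ = 2 - d s θ)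
    (w : ℤ → ℝ) (hw1 : 0 < w 1) (hwm : 0 < w (-1))
    (q : ℤ → ℝ) (Z : ℝ) (hZ : 0 < Z)
    (R Rhat : Θ → ℝ)
    (hR : ∀ θ, R θ = (1 / Z) * ∑ s : S, w (t s) * l s (t s) θ)
    (hRhat : ∀ θ, Rhat θ = (1 / Z) * ∑ s : S,
      ((1 - q (t s)) * w (t s) * l s (t s) θ + q (t s) * w (-(t s)) * l s (-(t s)) θ))
    (c : ℤ → ℝ) (hc : ∀ τ, c τ = 1 - q τ - q τ * (w (-τ) / w τ))
    (Q : ℝ) (hQ : Q = min (c 1) (c (-1)))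
    (θstar θ : Θ)
    (hpos : ∑ s ∈ Finset.univ.filter (fun s => t s = 1),
      (l s (t s) θstar - l s (t s) θ) ≤ 0)
    (hneg : ∑ s ∈ Finset.univ.filter (fun s => t s = -1),
      (l s (t s) θstar - l s (t s) θ) ≤ 0) :
    Rhat θstar - Rhat θ ≤ Q * (R θstar - R θ) := by
  have hl (s : S) (θ : Θ) : l s (t s) θ + l s (-t s) θ = 2 := by
    rcases ht s with h | h <;> simp [h, hl1, hlm]
  have hQc : ∀ τ ∈ ({1, -1} : Finset ℤ), Q ≤ noiseFactor Neg.neg q w τ := by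
    simp [noiseFactor, ← hc, hQ]
  rw [funext hR, funext hRhat]
  exact noisy_risk_difference_upper_bound_general hZ (by simpa using ht)
    (by simpa using ⟨hw1, hwm⟩) hl hQc (by simpa [-Finset.sum_sub_distrib] using ⟨hpos, hneg⟩)
end

section
/- (Proposition 4.1, unhinged triplet loss is noise tolerant.) Let S be a nonempty finite set of pairs, t : S → {−1, 1}, Θ a type, and for each s ∈ S let d_s : Θ → ℝ with 0 ≤ d_s(θ) ≤ 2 for all θ; set the auxiliary loss l_s(1; θ) = d_s(θ) and l_s(−1; θ) = 2 − d_s(θ). Let K ≥ 1 and use the 1-1 sampling weights w(1) = 1 and w(−1) = 1/K. Let q(1), q(−1) ∈ [0,1] be the pair-label corruption rates and let Z > 0. Define R(θ) = (1/Z) ∑_{s∈S} w(t_s)·l_s(t_s; θ) and R̂(θ) = (1/Z) ∑_{s∈S} [(1 − q(t_s))·w(t_s)·l_s(t_s; θ) + q(t_s)·w(−t_s)·l_s(−t_s; θ)]. Suppose θ* ∈ Θ satisfies: (i) for every θ ∈ Θ, ∑_{s : t_s = 1} l_s(t_s; θ*) ≤ ∑_{s : t_s = 1} l_s(t_s; θ)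 and ∑_{s : t_s = −1} l_s(t_s; θ*) ≤ ∑_{s : t_s = −1} l_s(t_s; θ); and (ii) 1 − q(1) − q(1)/K ≥ 0 and 1 − q(−1) − q(−1)·K ≥ 0. Then θ* is a global minimizer of the noisy risk: R̂(θ*) ≤ R̂(θ) for all θ ∈ Θ. -/
/-!
Since `l s 1 θ + l s (-1) θ = 2`, flipping the label of a pair replaces its loss `x` by `2 - x`.
Corruption therefore only adds a constant independent of `θ` and rescales the loss of a pair with
true label `y` by a factor depending on `y` alone; condition (ii) says that both factors are
nonnegative, so a simultaneous minimizer of the two class-wise losses minimizes the noisy risk.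
-/

theorem sum_mul_le_sum_mul_of_fiberwise_le {ι κ A : Type*} [DecidableEq κ] [Semiring A]
    [PartialOrder A] [IsOrderedRing A] {s : Finset ι} {g : ι → κ} {a : κ → A} {f₁ f₂ : ι → A}
    (ha : ∀ i ∈ s, 0 ≤ a (g i))
    (hf : ∀ i ∈ s, ∑ j ∈ s with g j = g i, f₁ j ≤ ∑ j ∈ s with g j = g i, f₂ j) :
    ∑ i ∈ s, a (g i) * f₁ i ≤ ∑ i ∈ s, a (g i) * f₂ i := by
  have sum_eq (f : ι → A) :
      ∑ i ∈ s, a (g i) * f i = ∑ k ∈ s.image g, a k * ∑ j ∈ s with g j = k, f j := by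
    rw [← Finset.sum_fiberwise_of_maps_to fun i hi => Finset.mem_image_of_mem g hi]
    refine Finset.sum_congr rfl fun k _ => ?_
    rw [Finset.mul_sum]
    exact Finset.sum_congr rfl fun j hj => by rw [(Finset.mem_filter.mp hj).2]
  rw [sum_eq, sum_eq]
  refine Finset.sum_le_sum (Finset.forall_mem_image.mpr fun i hi => ?_)
  exact mul_le_mul_of_nonneg_left (hf i hi) (ha i hi)

section Corruption

variable {Y A : Type*} [Neg Y] [CommRing A]

/-- The expected weighted loss of a pair with true label `y` whose label is observed as `-y` with
probability `q y`; `ℓ` gives the loss of the pair as a function of the observed label. -/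
def corruptedLoss (w q ℓ : Y → A) (y : Y) : A :=
  (1 - q y) * w y * ℓ y + q y * w (-y) * ℓ (-y)

/-- The weight that the loss at the true label `y` retains under label noise, once the loss at `-y`
has been eliminated through the symmetry of the loss. -/
def effectiveWeight (w q : Y → A) (y : Y) : A :=
  (1 - q y) * w y - q y * w (-y)

theorem corruptedLoss_eq_of_add_neg_eq {w q ℓ : Y → A} {y : Y} {c : A} (hℓ : ℓ y + ℓ (-y) = c) :
    corruptedLoss w q ℓ y = effectiveWeight w q y * ℓ y + q y * w (-y) * c := by
  rw [corruptedLoss, effectiveWeight, ← hℓ]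
  ring

end Corruption

section OneToOneSampling

variable {Y 𝕜 : Type*} [One Y] [Field 𝕜] {w q : Y → 𝕜} {K : 𝕜}

theorem effectiveWeight_one_of_oneToOne [Neg Y] (hw1 : w 1 = 1) (hwm : w (-1) = 1 / K) :
    effectiveWeight w q 1 = 1 - q 1 - q 1 / K := by
  rw [effectiveWeight, hw1, hwm]
  ring

theorem effectiveWeight_neg_one_of_oneToOne [InvolutiveNeg Y] (hK : K ≠ 0) (hw1 : w 1 = 1)
    (hwm : w (-1) = 1 / K) :
    effectiveWeight w q (-1) = (1 - q (-1) - q (-1) * K) / K := by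
  rw [effectiveWeight, neg_neg, hw1, hwm]
  field_simp

end OneToOneSampling

section Risk

variable {S Y Θ 𝕜 : Type*} [Fintype S] [Field 𝕜]

/-- The noisy risk `R̂` of the parameter `θ`: the corrupted losses of all pairs, summed and
normalized by `Z`. -/
def corruptedRisk [Neg Y] (Z : 𝕜) (t : S → Y) (w q : Y → 𝕜) (l : S → Y → Θ → 𝕜) (θ : Θ) : 𝕜 :=
  1 / Z * ∑ s, corruptedLoss w q (fun y => l s y θ) (t s)

theorem corruptedRisk_eq_of_add_neg_eq [Neg Y] {Z : 𝕜} {t : S → Y} {w q : Y → 𝕜}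
    {l : S → Y → Θ → 𝕜} {c : S → 𝕜} {θ : Θ} (hl : ∀ s, l s (t s) θ + l s (-t s) θ = c s) :
    corruptedRisk Z t w q l θ =
      1 / Z * (∑ s, effectiveWeight w q (t s) * l s (t s) θ + ∑ s, q (t s) * w (-t s) * c s) := by
  rw [corruptedRisk, ← Finset.sum_add_distrib]
  exact congrArg _ (Finset.sum_congr rfl fun s _ => corruptedLoss_eq_of_add_neg_eq (hl s))

theorem unhinged_triplet_loss_noise_tolerant_general [One Y] [InvolutiveNeg Y] [DecidableEq Y]
    [LinearOrder 𝕜] [IsStrictOrderedRing 𝕜] {Z : 𝕜} (hZ : 0 < Z)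
    {t : S → Y} (ht : ∀ s, t s = 1 ∨ t s = -1)
    {l : S → Y → Θ → 𝕜} {c : S → 𝕜} (hl : ∀ s θ, l s 1 θ + l s (-1) θ = c s)
    {w q : Y → 𝕜} (hpos : 0 ≤ effectiveWeight w q 1) (hneg : 0 ≤ effectiveWeight w q (-1))
    {θstar : Θ}
    (hmin : ∀ θ, ∑ s with t s = 1, l s (t s) θstar ≤ ∑ s with t s = 1, l s (t s) θ ∧
      ∑ s with t s = -1, l s (t s) θstar ≤ ∑ s with t s = -1, l s (t s) θ)
    (θ : Θ) :
    corruptedRisk Z t w q l θstar ≤ corruptedRisk Z t w q l θ := by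
  have symm (θ : Θ) (s : S) : l s (t s) θ + l s (-t s) θ = c s := by
    rcases ht s with h | h <;> rw [h]
    · exact hl s θ
    · rw [neg_neg, add_comm, hl]
  have weight_nonneg (s : S) : 0 ≤ effectiveWeight w q (t s) := by
    rcases ht s with h | h <;> rwa [h]
  have class_le (s : S) :
      ∑ r with t r = t s, l r (t r) θstar ≤ ∑ r with t r = t s, l r (t r) θ := by
    rcases ht s with h | h <;> rw [h]
    exacts [(hmin θ).1, (hmin θ).2]
  have weighted_le : ∑ s, effectiveWeight w q (t s) * l s (t s) θstar ≤
      ∑ s, effectiveWeight w q (t s) * l s (t s) θ :=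
    sum_mul_le_sum_mul_of_fiberwise_le (fun s _ => weight_nonneg s) fun s _ => class_le s
  rw [corruptedRisk_eq_of_add_neg_eq (symm θstar), corruptedRisk_eq_of_add_neg_eq (symm θ)]
  gcongr

end Risk

/-- Proposition 4.1: unhinged triplet loss with a 1-1 sampling scheme is
noise tolerant. -/
theorem unhinged_triplet_loss_noise_tolerant
    {S : Type*} [Fintype S] [Nonempty S] {Θ : Type*}
    (t : S → ℤ) (ht : ∀ s, t s = 1 ∨ t s = -1)
    (d : S → Θ → ℝ) (hd0 : ∀ s θ, 0 ≤ d s θ) (hd2 : ∀ s θ, d s θ ≤ 2)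
    (l : S → ℤ → Θ → ℝ)
    (hl1 : ∀ s θ, l s 1 θ = d s θ)
    (hlm : ∀ s θ, l s (-1) θ = 2 - d s θ)
    (K : ℕ) (hK : 1 ≤ K)
    (w : ℤ → ℝ) (hw1 : w 1 = 1) (hwm : w (-1) = 1 / (K : ℝ))
    (q : ℤ → ℝ) (hq0 : ∀ τ, 0 ≤ q τ) (hq1 : ∀ τ, q τ ≤ 1)
    (Z : ℝ) (hZ : 0 < Z)
    (R Rhat : Θ → ℝ)
    (hR : ∀ θ, R θ = (1 / Z) * ∑ s : S, w (t s) * l s (t s) θ)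
    (hRhat : ∀ θ, Rhat θ = (1 / Z) * ∑ s : S,
      ((1 - q (t s)) * w (t s) * l s (t s) θ + q (t s) * w (-(t s)) * l s (-(t s)) θ))
    (θstar : Θ)
    (hmin : ∀ θ : Θ,
      (∑ s ∈ Finset.univ.filter (fun s => t s = 1), l s (t s) θstar
        ≤ ∑ s ∈ Finset.univ.filter (fun s => t s = 1), l s (t s) θ) ∧
      (∑ s ∈ Finset.univ.filter (fun s => t s = -1), l s (t s) θstar
        ≤ ∑ s ∈ Finset.univ.filter (fun s => t s = -1), l s (t s) θ))
    (hcond1 : 0 ≤ 1 - q 1 - q 1 / (K : ℝ))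
    (hcond2 : 0 ≤ 1 - q (-1) - q (-1) * (K : ℝ)) :
    ∀ θ : Θ, Rhat θstar ≤ Rhat θ := by
  have hK0 : (0 : ℝ) < K := by exact_mod_cast hK
  rw [show Rhat = corruptedRisk Z t w q l from funext hRhat]
  exact unhinged_triplet_loss_noise_tolerant_general hZ ht
    (fun s θ => by rw [hl1, hlm, add_sub_cancel])
    (by rwa [effectiveWeight_one_of_oneToOne hw1 hwm])
    (effectiveWeight_neg_one_of_oneToOne hK0.ne' hw1 hwm ▸ div_nonneg hcond2 hK0.le) hmin
end

section
/- Fix reals p ∈ [0,1) and η ≥ 1 with p < 1 − Real.sqrt(1 − 1/η). Define, for natural numbers K ≥ 2, q₊₁(p,K) = 2p(1−p) + p²(K−2)/(K−1) and q₋₁(p,K) = 2p(1−p)/(K−1) + p²(K−2)/(K−1)². Then there exists K₀ such that for all K ≥ K₀: q₊₁(p,K)·(1 + η/K) < 1 and q₋₁(p,K)·(1 + η·K) < 1. (Hence the noise-tolerance conditions for triplet loss with semi-hard mining with skew factor η hold for all sufficiently large numbers of classes.) -/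
/-!
The two flip probabilities satisfy `q₋₁ = q₊₁ / (K - 1)`, and `q₊₁ → 1 - (1 - p) ^ 2`, the
probability that at least one of two labels is corrupted, as `K → ∞`. Hence the two
noise-tolerance expressions converge to `1 - (1 - p) ^ 2` and `(1 - (1 - p) ^ 2) * η`. The first
limit is below `1` because `p ≠ 1`; the second is because `√(1 - 1 / η) < 1 - p`, once squared,
reads `1 - (1 - p) ^ 2 < 1 / η`.
-/

open Filter Topology

/-- The probability `q₊₁(p, K)` that a positive pair becomes negative under uniform label noise of
rate `p` over `K` classes. Meaningful for `2 ≤ K`. -/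
noncomputable def positiveFlipProb (p : ℝ) (K : ℕ) : ℝ :=
  2 * p * (1 - p) + p ^ 2 * ((K : ℝ) - 2) / ((K : ℝ) - 1)

/-- The probability `q₋₁(p, K)` that a negative pair becomes positive under uniform label noise of
rate `p` over `K` classes. Meaningful for `2 ≤ K`. -/
noncomputable def negativeFlipProb (p : ℝ) (K : ℕ) : ℝ :=
  2 * p * (1 - p) / ((K : ℝ) - 1) + p ^ 2 * ((K : ℝ) - 2) / ((K : ℝ) - 1) ^ 2

theorem negativeFlipProb_eq_positiveFlipProb_div (p : ℝ) (K : ℕ) :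
    negativeFlipProb p K = positiveFlipProb p K / ((K : ℝ) - 1) := by
  rw [negativeFlipProb, positiveFlipProb, add_div, div_div, ← sq]

theorem tendsto_positiveFlipProb (p : ℝ) :
    Tendsto (positiveFlipProb p) atTop (𝓝 (1 - (1 - p) ^ 2)) := by
  have tendsto_ratio :
      Tendsto (fun K : ℕ => (-2 + 1 * (K : ℝ)) / (-1 + 1 * (K : ℝ))) atTop (𝓝 (1 / 1)) :=
    tendsto_add_mul_div_add_mul_atTop_nhds (-2) (-1) 1 one_ne_zero
  convert (tendsto_ratio.const_mul (p ^ 2)).const_add (2 * p * (1 - p)) using 2 with K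
  · rw [positiveFlipProb]; ring
  · ring

theorem tendsto_positiveFlipProb_mul_one_add_div (p η : ℝ) :
    Tendsto (fun K : ℕ => positiveFlipProb p K * (1 + η / K)) atTop (𝓝 (1 - (1 - p) ^ 2)) := by
  simpa only [add_zero, mul_one] using
    (tendsto_positiveFlipProb p).mul ((tendsto_const_div_atTop_nhds_zero_nat η).const_add 1)

theorem tendsto_negativeFlipProb_mul_one_add_mul (p η : ℝ) :
    Tendsto (fun K : ℕ => negativeFlipProb p K * (1 + η * K)) atTop
      (𝓝 ((1 - (1 - p) ^ 2) * η)) := by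
  have tendsto_ratio :
      Tendsto (fun K : ℕ => (1 + η * (K : ℝ)) / (-1 + 1 * (K : ℝ))) atTop (𝓝 (η / 1)) :=
    tendsto_add_mul_div_add_mul_atTop_nhds 1 (-1) η one_ne_zero
  convert (tendsto_positiveFlipProb p).mul tendsto_ratio using 2 with K
  · rw [negativeFlipProb_eq_positiveFlipProb_div]; ring
  · rw [div_one]

theorem one_sub_sq_mul_lt_one_of_lt_one_sub_sqrt {p η : ℝ} (hη : 0 < η)
    (hp : p < 1 - √(1 - 1 / η)) : (1 - (1 - p) ^ 2) * η < 1 := by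
  have lt_sq : 1 - 1 / η < (1 - p) ^ 2 := Real.lt_sq_of_sqrt_lt (lt_sub_comm.1 hp)
  exact (lt_div_iff₀ hη).1 (sub_lt_comm.1 lt_sq)

theorem semihard_tolerance_eventually_general {p η : ℝ} (hp : p ≠ 1)
    (hη : (1 - (1 - p) ^ 2) * η < 1) :
    ∀ᶠ K : ℕ in atTop,
      positiveFlipProb p K * (1 + η / K) < 1 ∧ negativeFlipProb p K * (1 + η * K) < 1 := by
  have limit_lt_one : 1 - (1 - p) ^ 2 < 1 :=
    sub_lt_self 1 (sq_pos_of_ne_zero (sub_ne_zero.2 hp.symm))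
  exact ((tendsto_positiveFlipProb_mul_one_add_div p η).eventually_lt_const limit_lt_one).and
    ((tendsto_negativeFlipProb_mul_one_add_mul p η).eventually_lt_const hη)

theorem semihard_tolerance_eventually
    (p η : ℝ) (hp0 : 0 ≤ p) (hp1 : p < 1) (hη : 1 ≤ η)
    (hbound : p < 1 - Real.sqrt (1 - 1 / η)) :
    ∃ K₀ : ℕ, ∀ K : ℕ, K₀ ≤ K →
      (2 * p * (1 - p) + p ^ 2 * ((K : ℝ) - 2) / ((K : ℝ) - 1))
          * (1 + η / (K : ℝ)) < 1 ∧
      (2 * p * (1 - p) / ((K : ℝ) - 1) + p ^ 2 * ((K : ℝ) - 2) / ((K : ℝ) - 1) ^ 2)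
          * (1 + η * (K : ℝ)) < 1 :=
  eventually_atTop.1 <| semihard_tolerance_eventually_general hp1.ne <|
    one_sub_sq_mul_lt_one_of_lt_one_sub_sqrt (zero_lt_one.trans_le hη) hbound
end

section
/- Fix a real p ∈ [0,1). Define, for natural numbers K ≥ 2, q₊₁(p,K) = 2p(1−p) + p²(K−2)/(K−1) and q₋₁(p,K) = 2p(1−p)/(K−1) + p²(K−2)/(K−1)². Then there exists K₀ such that for all K ≥ K₀: (1 + 1/K)·q₊₁(p,K) ≤ 1 and (1 + K)·q₋₁(p,K) ≤ 1. (Hence, with the 1-1 sampling weights w(1) = 1 and w(−1) = 1/K, the noise-tolerance condition of Proposition 4.1 holds for any fixed sample noise rate p < 1 once the number of classes is large enough, i.e., unhinged triplet loss tolerates noise rates up to p < 1 − ε(K).) -/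
/-!
The two flip probabilities satisfy `q₋₁ = q₊₁ / (K - 1)`, so for `K > 1` both tolerance inequalities
follow from the single bound `(K + 1) q₊₁ ≤ K - 1`. A positive pair survives if neither label is
flipped, whence `q₊₁ ≤ 1 - (1 - p)²`, and the bound holds as soon as `2 ≤ (K + 1) (1 - p)²`.
In particular the noise rates `p ≤ 1 - √(2 / (K + 1))` are tolerated.
-/

open Filter

section FlipProbabilities

variable {𝕜 : Type*} [Field 𝕜]

/-- The probability `q₊₁(p, κ)` that a pair with equal labels receives different labels under
uniform label noise of rate `p` over `κ` classes: either exactly one label is flipped, or both are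
flipped, to distinct classes. The number of classes is an element of `𝕜`, so that subtraction is
not truncated; at `κ = 1` the division makes the second summand `0`. -/
def posFlipProb (p κ : 𝕜) : 𝕜 :=
  2 * p * (1 - p) + p ^ 2 * (κ - 2) / (κ - 1)

/-- The probability `q₋₁(p, κ)` that a pair with different labels receives equal labels under
uniform label noise of rate `p` over `κ` classes: either exactly one label is flipped, to the other
one, or both are flipped to a common class. The number of classes is encoded as in
`posFlipProb`. -/
def negFlipProb (p κ : 𝕜) : 𝕜 :=
  2 * p * (1 - p) / (κ - 1) + p ^ 2 * (κ - 2) / (κ - 1) ^ 2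

theorem negFlipProb_eq_posFlipProb_div (p κ : 𝕜) :
    negFlipProb p κ = posFlipProb p κ / (κ - 1) := by
  rw [negFlipProb, posFlipProb, add_div, div_div, sq (κ - 1)]

theorem posFlipProb_eq_sub (p : 𝕜) {κ : 𝕜} (hκ : κ ≠ 1) :
    posFlipProb p κ = 1 - (1 - p) ^ 2 - p ^ 2 / (κ - 1) := by
  have hκ' : κ - 1 ≠ 0 := sub_ne_zero.mpr hκ
  rw [posFlipProb]
  field_simp
  ring

variable [LinearOrder 𝕜] [IsStrictOrderedRing 𝕜] {p κ : 𝕜}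

theorem posFlipProb_le (p : 𝕜) (hκ : 1 < κ) : posFlipProb p κ ≤ 1 - (1 - p) ^ 2 := by
  rw [posFlipProb_eq_sub p hκ.ne']
  exact sub_le_self _ (div_nonneg (sq_nonneg p) (sub_pos.mpr hκ).le)

theorem add_one_mul_posFlipProb_le (hκ : 1 < κ) (h : 2 ≤ (κ + 1) * (1 - p) ^ 2) :
    (κ + 1) * posFlipProb p κ ≤ κ - 1 :=
  calc
    (κ + 1) * posFlipProb p κ ≤ (κ + 1) * (1 - (1 - p) ^ 2) :=
      mul_le_mul_of_nonneg_left (posFlipProb_le p hκ) (by linarith)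
    _ = κ + 1 - (κ + 1) * (1 - p) ^ 2 := by ring
    _ ≤ κ - 1 := by linarith

theorem one_add_one_div_mul_posFlipProb_le_one (hκ : 1 < κ) (h : 2 ≤ (κ + 1) * (1 - p) ^ 2) :
    (1 + 1 / κ) * posFlipProb p κ ≤ 1 := by
  have hκ₀ : 0 < κ := one_pos.trans hκ
  rw [one_add_div hκ₀.ne', div_mul_eq_mul_div, div_le_one hκ₀]
  exact (add_one_mul_posFlipProb_le hκ h).trans (sub_le_self κ zero_le_one)

theorem one_add_mul_negFlipProb_le_one (hκ : 1 < κ) (h : 2 ≤ (κ + 1) * (1 - p) ^ 2) :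
    (1 + κ) * negFlipProb p κ ≤ 1 := by
  rw [negFlipProb_eq_posFlipProb_div, ← mul_div_assoc, div_le_one (sub_pos.mpr hκ), add_comm 1 κ]
  exact add_one_mul_posFlipProb_le hκ h

theorem eventually_two_le_add_one_mul_sq [Archimedean 𝕜] (hp : p ≠ 1) :
    ∀ᶠ K : ℕ in atTop, 2 ≤ ((K : 𝕜) + 1) * (1 - p) ^ 2 := by
  have hsq : 0 < (1 - p) ^ 2 := sq_pos_of_ne_zero (sub_ne_zero.mpr hp.symm)
  filter_upwards [tendsto_natCast_atTop_atTop.eventually_ge_atTop (2 / (1 - p) ^ 2)] with K hK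
  exact (div_le_iff₀ hsq).mp (hK.trans (le_add_of_nonneg_right zero_le_one))

theorem one_one_sampling_tolerance_eventually_general [Archimedean 𝕜] (hp : p ≠ 1) :
    ∀ᶠ K : ℕ in atTop,
      (1 + 1 / (K : 𝕜)) * posFlipProb p (K : 𝕜) ≤ 1 ∧
      (1 + (K : 𝕜)) * negFlipProb p (K : 𝕜) ≤ 1 := by
  filter_upwards [eventually_gt_atTop 1, eventually_two_le_add_one_mul_sq hp] with K hK h
  have hK' : (1 : 𝕜) < K := Nat.one_lt_cast.mpr hK
  exact ⟨one_add_one_div_mul_posFlipProb_le_one hK' h, one_add_mul_negFlipProb_le_one hK' h⟩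

end FlipProbabilities

theorem one_one_sampling_tolerance_eventually
    (p : ℝ) (hp0 : 0 ≤ p) (hp1 : p < 1) :
    ∃ K₀ : ℕ, ∀ K : ℕ, K₀ ≤ K →
      (1 + 1 / (K : ℝ)) * (2 * p * (1 - p) + p ^ 2 * ((K : ℝ) - 2) / ((K : ℝ) - 1)) ≤ 1 ∧
      (1 + (K : ℝ)) *
        (2 * p * (1 - p) / ((K : ℝ) - 1) + p ^ 2 * ((K : ℝ) - 2) / ((K : ℝ) - 1) ^ 2) ≤ 1 :=
  eventually_atTop.mp (one_one_sampling_tolerance_eventually_general hp1.ne)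
end
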